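/- Let N ≥ 2, let B ⊂ ℝ^N be a radial domain, let 𝓤 be a set of continuous functions on B, and define M = {e ∈ S : u(x) ≥ u(σ_e(x)) for all x ∈ B(e) and all u ∈ 𝓤}. Let ẽ ∈ M. Suppose that for every two-dimensional linear subspace P ⊆ ℝ^N containing ẽ there are two distinct points p₁, p₂ lying in the same connected component of M ∩ P such that u ≡ u ∘ σ_{p₁} and u ≡ u ∘ σ_{p₂} on B for every u ∈ 𝓤. Then there exists p ∈ S such that every u ∈ 𝓤 is foliated Schwarz symmetric with respect to p. -/

import Mathlib

/-!
Let `M` be the set of monotone directions and `T = M ∩ -M` (`symSet`) the set of common symmetry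
directions; both are closed.

The planar core is `circ_mem_of_short_arc`: if `a, b ∈ T` are joined inside a plane by an arc of `M`
shorter than a half circle, then every direction of that plane is in `T`. For arcs of length at
most `π / 2` the interior directions lie in `T`, since reflecting first at `s` and then at
`α + β - s` carries a point to one equivalent to it under the symmetries, so the two monotonicity
inequalities are equalities (`arc_subset_symSet`); the rotations generated by the arc then fill
the circle. Longer arcs contain a short one ending in `T`.

Consequently `M ∪ -M` is the whole sphere: if the line of a direction `e` misses `M`, the
connected component in the plane of `e` and `etilde` lies in an open half circle and contains the
short arc between `p₁` and `p₂`, so `e ∈ T` after all (`mem_or_neg_mem_of_plane`).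

Given `M ∪ -M = S`, the same planar fact shows that two noncollinear elements of `T` have
their whole plane in `T` (`circ_mem_of_two`), so `T` is the unit sphere of a linear subspace `W`.
If `W` is everything, then `M = S`. Otherwise take a unit vector `p ⟂ W`: the open hemisphere
around `p` is connected and free of `T`, so it lies in `M` or in `-M`, and by closedness `M`
contains a closed hemisphere (`exists_hemisphere`). Foliated Schwarz symmetry follows by
reflecting `x` to `y` in the direction `x - y`.
-/

open Set Metric Filter
open scoped RealInnerProductSpace

noncomputable section

variable {N : ℕ}

/-- Reflection through the hyperplane `H(e) = {x : ⟪x,e⟫ = 0}`: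
`σ_e(x) = x - 2 (x·e) e`. -/
def reflHyp (e x : EuclideanSpace ℝ (Fin N)) : EuclideanSpace ℝ (Fin N) :=
  x - (2 * ⟪x, e⟫) • e

/-- The half domain `B(e) = {x ∈ B : x·e > 0}`. -/
def halfDom (B : Set (EuclideanSpace ℝ (Fin N))) (e : EuclideanSpace ℝ (Fin N)) :
    Set (EuclideanSpace ℝ (Fin N)) := {x ∈ B | 0 < ⟪x, e⟫}

/-- A radial domain: an open ball or an open annulus centered at the origin. -/
def IsRadialDomain (B : Set (EuclideanSpace ℝ (Fin N))) : Prop :=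
  (∃ R, 0 < R ∧ B = Metric.ball 0 R) ∨
  (∃ r R, 0 < r ∧ r < R ∧ B = {x : EuclideanSpace ℝ (Fin N) | r < ‖x‖ ∧ ‖x‖ < R})

/-- `u` is foliated Schwarz symmetric on `D` with respect to the unit vector `p`:
`u(x) ≥ u(y)` whenever `|x| = |y|` and `x·p ≥ y·p`.  (This is equivalent to axial
symmetry with respect to `ℝp` together with monotonicity in the polar angle.) -/
def FoliatedSchwarzOn (D : Set (EuclideanSpace ℝ (Fin N)))
    (u : EuclideanSpace ℝ (Fin N) → ℝ) (p : EuclideanSpace ℝ (Fin N)) : Prop :=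
  ∀ x ∈ D, ∀ y ∈ D, ‖x‖ = ‖y‖ → ⟪y, p⟫ ≤ ⟪x, p⟫ → u y ≤ u x

/-- The set `M = {e ∈ S : u ≥ u ∘ σ_e on B(e) for all u ∈ 𝓤}`. -/
def reflMonotoneSet (B : Set (EuclideanSpace ℝ (Fin N)))
    (𝓤 : Set (EuclideanSpace ℝ (Fin N) → ℝ)) : Set (EuclideanSpace ℝ (Fin N)) :=
  {e | ‖e‖ = 1 ∧ ∀ u ∈ 𝓤, ∀ x ∈ halfDom B e, u (reflHyp e x) ≤ u x}

/-! ### Reflections and the two sets of directions -/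

/-- The set of common symmetry directions: unit vectors `e` such that every `u ∈ 𝓤` is invariant
under `σ_e` on `B`. -/
def symSet (B : Set (EuclideanSpace ℝ (Fin N)))
    (𝓤 : Set (EuclideanSpace ℝ (Fin N) → ℝ)) : Set (EuclideanSpace ℝ (Fin N)) :=
  {e | ‖e‖ = 1 ∧ ∀ u ∈ 𝓤, ∀ x ∈ B, u (reflHyp e x) = u x}

/-- The point at angle `θ` of the unit circle in the plane with orthonormal basis `f, g`. -/
def circ (f g : EuclideanSpace ℝ (Fin N)) (θ : ℝ) : EuclideanSpace ℝ (Fin N) :=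
  Real.cos θ • f + Real.sin θ • g

lemma inner_self_of_unit {e : EuclideanSpace ℝ (Fin N)} (he : ‖e‖ = 1) : ⟪e, e⟫ = 1 := by
  rw [real_inner_self_eq_norm_sq, he]; norm_num

lemma inner_reflHyp_self {e : EuclideanSpace ℝ (Fin N)} (he : ‖e‖ = 1)
    (x : EuclideanSpace ℝ (Fin N)) : ⟪reflHyp e x, e⟫ = -⟪x, e⟫ := by
  simp only [reflHyp, inner_sub_left, inner_smul_left, inner_self_of_unit he]
  simp; ring

lemma reflHyp_reflHyp {e : EuclideanSpace ℝ (Fin N)} (he : ‖e‖ = 1)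
    (x : EuclideanSpace ℝ (Fin N)) : reflHyp e (reflHyp e x) = x := by
  rw [reflHyp, inner_reflHyp_self he, reflHyp]
  module

lemma norm_reflHyp {e : EuclideanSpace ℝ (Fin N)} (he : ‖e‖ = 1)
    (x : EuclideanSpace ℝ (Fin N)) : ‖reflHyp e x‖ = ‖x‖ := by
  have h : ‖reflHyp e x‖ ^ 2 = ‖x‖ ^ 2 := by
    rw [← real_inner_self_eq_norm_sq, ← real_inner_self_eq_norm_sq]
    simp only [reflHyp, inner_sub_left, inner_sub_right, inner_smul_left, inner_smul_right,
      inner_self_of_unit he, real_inner_comm x e]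
    simp; ring
  exact (sq_eq_sq₀ (norm_nonneg _) (norm_nonneg _)).1 h

lemma inner_reflHyp_left (e x y : EuclideanSpace ℝ (Fin N)) :
    ⟪reflHyp e x, y⟫ = ⟪x, reflHyp e y⟫ := by
  simp only [reflHyp, inner_sub_left, inner_sub_right, inner_smul_left, inner_smul_right,
    real_inner_comm y e]
  simp; ring

lemma reflHyp_neg (e x : EuclideanSpace ℝ (Fin N)) : reflHyp (-e) x = reflHyp e x := by
  simp [reflHyp]

lemma isOpen_of_radial {B : Set (EuclideanSpace ℝ (Fin N))} (hB : IsRadialDomain B) :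
    IsOpen B := by
  rcases hB with ⟨R, _, rfl⟩ | ⟨r, R, _, _, rfl⟩
  · exact isOpen_ball
  · exact (isOpen_lt continuous_const continuous_norm).inter
      (isOpen_lt continuous_norm continuous_const)

lemma mem_of_norm_eq {B : Set (EuclideanSpace ℝ (Fin N))} (hB : IsRadialDomain B)
    {x y : EuclideanSpace ℝ (Fin N)} (hx : x ∈ B) (h : ‖y‖ = ‖x‖) : y ∈ B := by
  rcases hB with ⟨R, _, rfl⟩ | ⟨r, R, _, _, rfl⟩
  · simpa [h] using hx
  · simpa [h] using hx

section Directions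

variable {B : Set (EuclideanSpace ℝ (Fin N))} {𝓤 : Set (EuclideanSpace ℝ (Fin N) → ℝ)}

/-- On the hyperplane itself the reflection is the identity, so the inequality defining `M` also
holds on the closed half domain. -/
lemma le_of_mem_reflMonotoneSet {e : EuclideanSpace ℝ (Fin N)}
    (he : e ∈ reflMonotoneSet B 𝓤) {u : EuclideanSpace ℝ (Fin N) → ℝ} (hu : u ∈ 𝓤)
    {x : EuclideanSpace ℝ (Fin N)} (hx : x ∈ B) (h : 0 ≤ ⟪x, e⟫) : u (reflHyp e x) ≤ u x := by
  rcases h.eq_or_lt with h | h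
  · simp [reflHyp, ← h]
  · exact he.2 u hu x ⟨hx, h⟩

lemma reflHyp_mem (hB : IsRadialDomain B) {e : EuclideanSpace ℝ (Fin N)} (he : ‖e‖ = 1)
    {x : EuclideanSpace ℝ (Fin N)} (hx : x ∈ B) : reflHyp e x ∈ B :=
  mem_of_norm_eq hB hx (norm_reflHyp he x)

/-- If reflecting never increases `u` on the closed half domain, and never decreases it either,
then `e` is a symmetry direction. -/
lemma mem_symSet_of_le (hB : IsRadialDomain B) {e : EuclideanSpace ℝ (Fin N)}
    (he : e ∈ reflMonotoneSet B 𝓤)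
    (h : ∀ u ∈ 𝓤, ∀ x ∈ B, 0 ≤ ⟪x, e⟫ → u x ≤ u (reflHyp e x)) : e ∈ symSet B 𝓤 := by
  have key : ∀ u ∈ 𝓤, ∀ x ∈ B, 0 ≤ ⟪x, e⟫ → u (reflHyp e x) = u x := fun u hu x hx h0 =>
    le_antisymm (le_of_mem_reflMonotoneSet he hu hx h0) (h u hu x hx h0)
  refine ⟨he.1, fun u hu x hx => ?_⟩
  rcases le_total 0 ⟪x, e⟫ with h0 | h0
  · exact key u hu x hx h0
  · have := key u hu (reflHyp e x) (reflHyp_mem hB he.1 hx)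
      (by rw [inner_reflHyp_self he.1]; linarith)
    rw [reflHyp_reflHyp he.1] at this
    exact this.symm

lemma mem_symSet_iff (hB : IsRadialDomain B) {e : EuclideanSpace ℝ (Fin N)} :
    e ∈ symSet B 𝓤 ↔ e ∈ reflMonotoneSet B 𝓤 ∧ -e ∈ reflMonotoneSet B 𝓤 := by
  constructor
  · rintro ⟨h1, h⟩
    refine ⟨⟨h1, fun u hu x hx => (h u hu x hx.1).le⟩,
      ⟨by simpa using h1, fun u hu x hx => ?_⟩⟩
    rw [reflHyp_neg]
    exact (h u hu x hx.1).le
  · rintro ⟨h1, h2⟩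
    refine mem_symSet_of_le hB h1 fun u hu x hx h0 => ?_
    have := le_of_mem_reflMonotoneSet h2 hu (reflHyp_mem hB h1.1 hx)
      (by rw [inner_neg_right, inner_reflHyp_self h1.1]; linarith)
    rwa [reflHyp_neg, reflHyp_reflHyp h1.1] at this

lemma neg_mem_symSet (hB : IsRadialDomain B) {e : EuclideanSpace ℝ (Fin N)}
    (h : e ∈ symSet B 𝓤) : -e ∈ symSet B 𝓤 := by
  rw [mem_symSet_iff hB] at h ⊢
  simpa using h.symm

lemma isClosed_reflMonotoneSet (hB : IsRadialDomain B) (h𝓤 : ∀ u ∈ 𝓤, ContinuousOn u B) :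
    IsClosed (reflMonotoneSet B 𝓤) := by
  refine IsSeqClosed.isClosed fun s e hs hlim => ?_
  have he : ‖e‖ = 1 :=
    tendsto_nhds_unique hlim.norm (by simp [fun n => (hs n).1])
  refine ⟨he, fun u hu x hx => ?_⟩
  have h1 : Tendsto (fun n => ⟪x, s n⟫) atTop (nhds ⟪x, e⟫) := tendsto_const_nhds.inner hlim
  have h2 : Tendsto (fun n => reflHyp (s n) x) atTop (nhds (reflHyp e x)) := by
    unfold reflHyp
    exact tendsto_const_nhds.sub ((h1.const_mul 2).smul hlim)
  have hc : ContinuousAt u (reflHyp e x) :=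
    (h𝓤 u hu).continuousAt ((isOpen_of_radial hB).mem_nhds (reflHyp_mem hB he hx.1))
  refine le_of_tendsto (hc.tendsto.comp h2) ?_
  filter_upwards [h1.eventually (lt_mem_nhds hx.2)] with n hn
  exact (hs n).2 u hu x ⟨hx.1, hn⟩

/-! ### Angles in a plane -/

variable {f g : EuclideanSpace ℝ (Fin N)}

lemma inner_circ (x : EuclideanSpace ℝ (Fin N)) (θ : ℝ) :
    ⟪x, circ f g θ⟫ = ⟪x, f⟫ * Real.cos θ + ⟪x, g⟫ * Real.sin θ := by
  simp [circ, inner_add_right, inner_smul_right, mul_comm]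

lemma inner_circ_circ (hf : ‖f‖ = 1) (hg : ‖g‖ = 1) (hfg : ⟪f, g⟫ = 0) (α β : ℝ) :
    ⟪circ f g α, circ f g β⟫ = Real.cos (α - β) := by
  have hgf : ⟪g, f⟫ = 0 := by rw [real_inner_comm, hfg]
  simp only [circ, inner_add_left, inner_add_right, inner_smul_left, inner_smul_right,
    inner_self_of_unit hf, inner_self_of_unit hg, hfg, hgf, Real.cos_sub]
  simp [mul_comm]

lemma norm_circ (hf : ‖f‖ = 1) (hg : ‖g‖ = 1) (hfg : ⟪f, g⟫ = 0) (θ : ℝ) :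
    ‖circ f g θ‖ = 1 := by
  have h := inner_circ_circ hf hg hfg θ θ
  rw [real_inner_self_eq_norm_sq, sub_self, Real.cos_zero] at h
  exact (pow_eq_one_iff_of_nonneg (norm_nonneg _) two_ne_zero).1 h

lemma circ_add_pi (θ : ℝ) : circ f g (θ + Real.pi) = -circ f g θ := by
  simp [circ]; module

lemma continuous_circ : Continuous (circ f g) := by
  unfold circ; fun_prop

/-- Every vector of the plane has polar coordinates. -/
lemma exists_circ (f g : EuclideanSpace ℝ (Fin N)) (a b : ℝ) :
    ∃ r θ : ℝ, a • f + b • g = r • circ f g θ := by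
  refine ⟨‖(⟨a, b⟩ : ℂ)‖, Complex.arg ⟨a, b⟩, ?_⟩
  rw [circ, smul_add, smul_smul, smul_smul, Complex.norm_mul_cos_arg, Complex.norm_mul_sin_arg]

lemma reflHyp_circ (x : EuclideanSpace ℝ (Fin N)) (θ : ℝ) :
    reflHyp (circ f g θ) x =
      x - (⟪x, f⟫ * (1 + Real.cos (2 * θ)) + ⟪x, g⟫ * Real.sin (2 * θ)) • f
        - (⟪x, f⟫ * Real.sin (2 * θ) + ⟪x, g⟫ * (1 - Real.cos (2 * θ))) • g := by
  have hs := Real.sin_sq_add_cos_sq θ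
  have h1 : (1 + Real.cos (2 * θ)) = 2 * Real.cos θ ^ 2 := by rw [Real.cos_two_mul]; ring
  have h2 : (1 - Real.cos (2 * θ)) = 2 * Real.sin θ ^ 2 := by
    rw [Real.cos_two_mul]; linear_combination -2 * hs
  rw [reflHyp, inner_circ, h1, h2, Real.sin_two_mul, circ]
  module

/-- In a plane, the product of three reflections is the reflection at the alternating sum of the
angles. -/
lemma reflHyp_circ_three (hf : ‖f‖ = 1) (hg : ‖g‖ = 1) (hfg : ⟪f, g⟫ = 0)
    (x : EuclideanSpace ℝ (Fin N)) (α β γ : ℝ) :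
    reflHyp (circ f g α) (reflHyp (circ f g β) (reflHyp (circ f g γ) x)) =
      reflHyp (circ f g (α - β + γ)) x := by
  have hgf : ⟪g, f⟫ = 0 := by rw [real_inner_comm, hfg]
  -- In the coordinates of the plane, the reflection acts by an explicit 2 × 2 matrix.
  have hF : ∀ (y : EuclideanSpace ℝ (Fin N)) (θ : ℝ), ⟪reflHyp (circ f g θ) y, f⟫ =
      -(⟪y, f⟫ * Real.cos (2 * θ) + ⟪y, g⟫ * Real.sin (2 * θ)) := by
    intro y θ
    rw [reflHyp_circ]
    simp only [inner_sub_left, inner_smul_left, inner_self_of_unit hf, hgf]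
    simp; ring
  have hG : ∀ (y : EuclideanSpace ℝ (Fin N)) (θ : ℝ), ⟪reflHyp (circ f g θ) y, g⟫ =
      -(⟪y, f⟫ * Real.sin (2 * θ) - ⟪y, g⟫ * Real.cos (2 * θ)) := by
    intro y θ
    rw [reflHyp_circ]
    simp only [inner_sub_left, inner_smul_left, inner_self_of_unit hg, hfg]
    simp; ring
  have e : 2 * (α - β + γ) = 2 * α - 2 * β + 2 * γ := by ring
  rw [reflHyp_circ _ α, hF _ β, hG _ β, reflHyp_circ _ β, hF _ γ, hG _ γ, reflHyp_circ _ γ,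
    reflHyp_circ _ (α - β + γ), e, Real.cos_add, Real.sin_add, Real.cos_sub, Real.sin_sub]
  module

lemma reflHyp_circ_circ (hf : ‖f‖ = 1) (hg : ‖g‖ = 1) (hfg : ⟪f, g⟫ = 0) (α θ : ℝ) :
    reflHyp (circ f g α) (circ f g θ) = -circ f g (2 * α - θ) := by
  have h1 : Real.cos (2 * α - θ) = 2 * Real.cos (θ - α) * Real.cos α - Real.cos θ := by
    rw [show 2 * α - θ = α - (θ - α) by ring, Real.cos_sub α]
    have : Real.cos θ = Real.cos ((θ - α) + α) := by ring_nf
    rw [this, Real.cos_add (θ - α) α]; ring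
  have h2 : Real.sin (2 * α - θ) = 2 * Real.cos (θ - α) * Real.sin α - Real.sin θ := by
    rw [show 2 * α - θ = α - (θ - α) by ring, Real.sin_sub α]
    have : Real.sin θ = Real.sin ((θ - α) + α) := by ring_nf
    rw [this, Real.sin_add (θ - α) α]; ring
  rw [reflHyp, inner_circ_circ hf hg hfg]
  simp only [circ, h1, h2]
  module

/-- Symmetry directions of a plane are stable under reflection of angles. -/
lemma circ_reflect_mem (hB : IsRadialDomain B) (hf : ‖f‖ = 1) (hg : ‖g‖ = 1) (hfg : ⟪f, g⟫ = 0)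
    {α β : ℝ} (hα : circ f g α ∈ symSet B 𝓤) (hβ : circ f g β ∈ symSet B 𝓤) :
    circ f g (2 * α - β) ∈ symSet B 𝓤 := by
  refine ⟨norm_circ hf hg hfg _, fun u hu x hx => ?_⟩
  have h1 := reflHyp_mem hB hα.1 hx
  rw [show 2 * α - β = α - β + α by ring, ← reflHyp_circ_three hf hg hfg,
    hα.2 u hu _ (reflHyp_mem hB hβ.1 h1), hβ.2 u hu _ h1, hα.2 u hu x hx]

/-- An arc of `M` of length at most a quarter circle whose end points are symmetry directions
consists of symmetry directions: for `s` in the arc, `u x ≥ u (σ_s x)`, and reflecting once more at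
the mirrored angle `α + β - s` shows that `u (σ_s x)` is at least `u` at a point equivalent to `x`
under the symmetries. -/
lemma arc_subset_symSet (hB : IsRadialDomain B) (hf : ‖f‖ = 1) (hg : ‖g‖ = 1)
    (hfg : ⟪f, g⟫ = 0) {α β : ℝ} (hαβ : α ≤ β) (hlen : β - α ≤ Real.pi / 2)
    (hα : circ f g α ∈ symSet B 𝓤) (hβ : circ f g β ∈ symSet B 𝓤)
    (harc : ∀ s ∈ Icc α β, circ f g s ∈ reflMonotoneSet B 𝓤) :
    ∀ s ∈ Icc α β, circ f g s ∈ symSet B 𝓤 := by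
  intro s hs
  refine mem_symSet_of_le hB (harc s hs) fun u hu x hx h0 => ?_
  have hs' : circ f g (α + β - s) ∈ reflMonotoneSet B 𝓤 :=
    harc _ ⟨by linarith [hs.2], by linarith [hs.1]⟩
  have hsx := reflHyp_mem hB (norm_circ hf hg hfg s) hx
  have step : ∀ a b : ℝ, a + b = α + β → circ f g a ∈ symSet B 𝓤 → circ f g b ∈ symSet B 𝓤 →
      0 ≤ ⟪x, circ f g (s + (b - a))⟫ → u x ≤ u (reflHyp (circ f g s) x) := by
    intro a b hab ha hb hpos
    have h := le_of_mem_reflMonotoneSet hs' hu (reflHyp_mem hB ha.1 hsx) (by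
      rw [inner_reflHyp_left, inner_reflHyp_left, reflHyp_circ_circ hf hg hfg]
      have : reflHyp (circ f g s) (-circ f g (2 * a - (α + β - s))) =
          -reflHyp (circ f g s) (circ f g (2 * a - (α + β - s))) := by
        simp [reflHyp]; module
      rw [this, reflHyp_circ_circ hf hg hfg, neg_neg]
      convert hpos using 3
      linarith)
    rw [reflHyp_circ_three hf hg hfg, show α + β - s - a + s = b by linarith, hb.2 u hu x hx,
      ha.2 u hu _ hsx] at h
    exact h
  have hsum : ⟪x, circ f g (s + (β - α))⟫ + ⟪x, circ f g (s + (α - β))⟫ =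
      2 * Real.cos (β - α) * ⟪x, circ f g s⟫ := by
    have : α - β = -(β - α) := by ring
    simp only [inner_circ, this, Real.cos_add, Real.sin_add, Real.cos_neg, Real.sin_neg]
    ring
  have hcos : 0 ≤ Real.cos (β - α) :=
    Real.cos_nonneg_of_mem_Icc ⟨by linarith [Real.pi_pos], hlen⟩
  have hnn : 0 ≤ 2 * Real.cos (β - α) * ⟪x, circ f g s⟫ := by positivity
  rcases le_total 0 ⟪x, circ f g (s + (β - α))⟫ with h | h
  · exact step α β rfl hα hβ h
  · exact step β α (add_comm _ _) hβ hα (by linarith)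

/-- Rotations by twice the angle between symmetry directions preserve the set of symmetry
directions, so a nontrivial arc of symmetry directions fills the circle. -/
lemma circ_mem_of_arc (hB : IsRadialDomain B) (hf : ‖f‖ = 1) (hg : ‖g‖ = 1)
    (hfg : ⟪f, g⟫ = 0) {α β : ℝ} (hαβ : α < β)
    (harc : ∀ s ∈ Icc α β, circ f g s ∈ symSet B 𝓤) (γ : ℝ) : circ f g γ ∈ symSet B 𝓤 := by
  have hrot : ∀ t, |t| ≤ β - α → ∀ θ, circ f g θ ∈ symSet B 𝓤 →
      circ f g (θ + 2 * t) ∈ symSet B 𝓤 := by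
    intro t ht θ hθ
    rw [abs_le] at ht
    rcases le_total 0 t with h0 | h0
    · have h1 := circ_reflect_mem hB hf hg hfg (harc α ⟨le_rfl, hαβ.le⟩) hθ
      have h2 := circ_reflect_mem hB hf hg hfg
        (harc (α + t) ⟨by linarith, by linarith⟩) h1
      convert h2 using 2; ring
    · have h1 := circ_reflect_mem hB hf hg hfg (harc β ⟨hαβ.le, le_rfl⟩) hθ
      have h2 := circ_reflect_mem hB hf hg hfg
        (harc (β + t) ⟨by linarith, by linarith⟩) h1
      convert h2 using 2; ring
  obtain ⟨n, hn⟩ := exists_nat_gt (|γ - α| / (2 * (β - α)))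
  have hd : 0 < β - α := sub_pos.2 hαβ
  have hn0 : (0 : ℝ) < n := lt_of_le_of_lt (by positivity) hn
  have ht : |(γ - α) / (2 * n)| ≤ β - α := by
    rw [abs_div, abs_of_pos (by positivity : (0 : ℝ) < 2 * n), div_le_iff₀ (by positivity)]
    rw [div_lt_iff₀ (by positivity)] at hn
    linarith
  have hk : ∀ k : ℕ, circ f g (α + k * (2 * ((γ - α) / (2 * n)))) ∈ symSet B 𝓤 := by
    intro k
    induction k with
    | zero => simpa using harc α ⟨le_rfl, hαβ.le⟩
    | succ k ih =>
      convert hrot _ ht _ ih using 2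
      push_cast; ring
  convert hk n using 2
  field_simp
  ring

/-- An arc of `M` shorter than a half circle and joining two symmetry directions forces the whole
circle to consist of symmetry directions. -/
lemma circ_mem_of_short_arc (hB : IsRadialDomain B) (hf : ‖f‖ = 1) (hg : ‖g‖ = 1)
    (hfg : ⟪f, g⟫ = 0) {α β : ℝ} (hαβ : α < β) (hlen : β - α < Real.pi)
    (hα : circ f g α ∈ symSet B 𝓤) (hβ : circ f g β ∈ symSet B 𝓤)
    (harc : ∀ s ∈ Icc α β, circ f g s ∈ reflMonotoneSet B 𝓤) (γ : ℝ) :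
    circ f g γ ∈ symSet B 𝓤 := by
  rcases le_or_gt (β - α) (Real.pi / 2) with h | h
  · exact circ_mem_of_arc hB hf hg hfg hαβ
      (arc_subset_symSet hB hf hg hfg hαβ.le h hα hβ harc) γ
  · -- For a long arc, the antipode of the mirror image of `α` at `β` lies in the arc, at
    -- distance `π - (β - α) < π / 2` from `β`.
    have h1 : circ f g (2 * β - α - Real.pi) ∈ symSet B 𝓤 := by
      have h2 := neg_mem_symSet hB (circ_reflect_mem hB hf hg hfg hβ hα)
      have h3 := circ_add_pi (f := f) (g := g) (2 * β - α - Real.pi)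
      rw [sub_add_cancel] at h3
      rwa [h3, neg_neg] at h2
    have hlt : 2 * β - α - Real.pi < β := by linarith
    refine circ_mem_of_arc hB hf hg hfg hlt (arc_subset_symSet hB hf hg hfg hlt.le
      (by linarith) h1 hβ fun s hs => harc s ⟨by linarith [hs.1], hs.2⟩) γ

/-! ### Every direction is monotone up to sign -/

/-- A preconnected subset of the unit circle of the plane that avoids the line through `circ θ`
lies strictly on one side of it. -/
lemma sin_mul_sin_pos (hf : ‖f‖ = 1) (hg : ‖g‖ = 1) (hfg : ⟪f, g⟫ = 0)
    {K : Set (EuclideanSpace ℝ (Fin N))} (hK : IsPreconnected K)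
    (hKc : ∀ v ∈ K, ∃ τ, v = circ f g τ) {θ : ℝ}
    (h1 : circ f g θ ∉ K) (h2 : -circ f g θ ∉ K) {α β : ℝ}
    (hα : circ f g α ∈ K) (hβ : circ f g β ∈ K) :
    0 < Real.sin (α - θ) * Real.sin (β - θ) := by
  have hg' : ∀ τ, ⟪circ f g τ, circ f g (θ + Real.pi / 2)⟫ = Real.sin (τ - θ) := by
    intro τ
    rw [inner_circ_circ hf hg hfg, ← sub_sub, Real.cos_sub_pi_div_two]
  have hne : ∀ τ, circ f g τ ∈ K → Real.sin (τ - θ) ≠ 0 := by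
    intro τ hτ h0
    have hcos : circ f g τ = Real.cos (τ - θ) • circ f g θ := by
      have e1 : τ = (τ - θ) + θ := by ring
      have c1 : Real.cos τ = Real.cos (τ - θ) * Real.cos θ := by
        conv_lhs => rw [e1, Real.cos_add, h0]
        ring
      have c2 : Real.sin τ = Real.cos (τ - θ) * Real.sin θ := by
        conv_lhs => rw [e1, Real.sin_add, h0]
        ring
      rw [circ, c1, c2, circ]; module
    rcases Real.sin_eq_zero_iff_cos_eq.1 h0 with h | h
    · rw [hcos, h, one_smul] at hτ; exact h1 hτ
    · rw [hcos, h, neg_one_smul] at hτ; exact h2 hτ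
  have hI : (((fun v => ⟪v, circ f g (θ + Real.pi / 2)⟫) '' K) : Set ℝ).OrdConnected :=
    (hK.image _ (by fun_prop)).ordConnected
  have hα' := mem_image_of_mem (fun v => ⟪v, circ f g (θ + Real.pi / 2)⟫) hα
  have hβ' := mem_image_of_mem (fun v => ⟪v, circ f g (θ + Real.pi / 2)⟫) hβ
  simp only [hg'] at hα' hβ'
  have h0 : (0 : ℝ) ∉ (fun v => ⟪v, circ f g (θ + Real.pi / 2)⟫) '' K := by
    rintro ⟨v, hv, hv0⟩
    obtain ⟨τ, rfl⟩ := hKc v hv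
    exact hne τ hv (by rw [← hg']; exact hv0)
  rcases lt_or_gt_of_ne (hne α hα) with ha | ha <;> rcases lt_or_gt_of_ne (hne β hβ) with hb | hb
  · exact mul_pos_of_neg_of_neg ha hb
  · exact (h0 (hI.out hα' hβ' ⟨ha.le, hb.le⟩)).elim
  · exact (h0 (hI.out hβ' hα' ⟨hb.le, ha.le⟩)).elim
  · exact mul_pos ha hb

/-- If two distinct symmetry directions are joined by a connected subset of `M` in the plane, then
the line through `f` meets `M`. Otherwise the connected set lies in an open half circle, so it
contains the short arc between the two directions. -/
lemma mem_or_neg_mem_of_plane (hB : IsRadialDomain B) (hf : ‖f‖ = 1) (hg : ‖g‖ = 1)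
    (hfg : ⟪f, g⟫ = 0) {K : Set (EuclideanSpace ℝ (Fin N))} (hK : IsPreconnected K)
    (hKM : K ⊆ reflMonotoneSet B 𝓤) (hKc : ∀ v ∈ K, ∃ τ, v = circ f g τ)
    {p₁ p₂ : EuclideanSpace ℝ (Fin N)} (hne : p₁ ≠ p₂) (hp₁ : p₁ ∈ K) (hp₂ : p₂ ∈ K)
    (hs₁ : p₁ ∈ symSet B 𝓤) (hs₂ : p₂ ∈ symSet B 𝓤) :
    f ∈ reflMonotoneSet B 𝓤 ∨ -f ∈ reflMonotoneSet B 𝓤 := by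
  by_contra! hcon
  have hf0 : circ f g 0 = f := by simp [circ]
  have side : ∀ α β, circ f g α ∈ K → circ f g β ∈ K → 0 < Real.sin α * Real.sin β := by
    intro α β hα hβ
    have := sin_mul_sin_pos hf hg hfg hK hKc (θ := 0) (fun h => hcon.1 (hf0 ▸ hKM h))
      (fun h => hcon.2 (hf0 ▸ hKM h)) hα hβ
    simpa using this
  have main : ∀ α β, circ f g α ∈ K → circ f g β ∈ K → circ f g α ∈ symSet B 𝓤 →
      circ f g β ∈ symSet B 𝓤 → α < β → β - α < Real.pi →
      (∀ s ∈ Ioo α β, 0 < Real.sin α * Real.sin s) → False := by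
    intro α β hα hβ hαs hβs hlt hlen hsin
    have harc : ∀ s ∈ Icc α β, circ f g s ∈ reflMonotoneSet B 𝓤 := by
      intro s hs
      rcases hs.1.eq_or_lt with rfl | h1
      · exact hKM hα
      rcases hs.2.eq_or_lt with rfl | h2
      · exact hKM hβ
      by_contra hsM
      have hneg : -circ f g s ∉ K := by
        intro h
        rw [← circ_add_pi] at h
        have h3 := side _ _ hα h
        rw [Real.sin_add_pi] at h3
        linarith [hsin s ⟨h1, h2⟩]
      have h4 := sin_mul_sin_pos hf hg hfg hK hKc (fun h => hsM (hKM h)) hneg hα hβ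
      have h5 : Real.sin (α - s) < 0 :=
        Real.sin_neg_of_neg_of_neg_pi_lt (by linarith) (by linarith)
      have h6 : 0 < Real.sin (β - s) := Real.sin_pos_of_pos_of_lt_pi (by linarith) (by linarith)
      linarith [mul_neg_of_neg_of_pos h5 h6]
    have := circ_mem_of_short_arc hB hf hg hfg hlt hlen hαs hβs harc 0
    rw [hf0] at this
    exact hcon.1 ((mem_symSet_iff hB).1 this).1
  -- Angles can be chosen in `(-π, π]`.
  have norm_angle : ∀ v ∈ K, ∃ τ, v = circ f g τ ∧ -Real.pi < τ ∧ τ ≤ Real.pi := by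
    intro v hv
    obtain ⟨τ, rfl⟩ := hKc v hv
    refine ⟨(τ : Real.Angle).toReal, ?_, Real.Angle.neg_pi_lt_toReal _,
      Real.Angle.toReal_le_pi _⟩
    rw [circ, circ, Real.Angle.cos_toReal, Real.Angle.sin_toReal, Real.Angle.cos_coe,
      Real.Angle.sin_coe]
  obtain ⟨α, rfl, hα1, hα2⟩ := norm_angle p₁ hp₁
  obtain ⟨β, rfl, hβ1, hβ2⟩ := norm_angle p₂ hp₂
  have hab := side _ _ hp₁ hp₂
  have hne' : α ≠ β := fun h => hne (by rw [h])
  have pos_of : ∀ τ, -Real.pi < τ → τ ≤ Real.pi → 0 < Real.sin τ → 0 < τ ∧ τ < Real.pi := by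
    intro τ h1 h2 h3
    refine ⟨?_, ?_⟩
    · by_contra! h; linarith [Real.sin_nonpos_of_nonpos_of_neg_pi_le h h1.le]
    · rcases h2.eq_or_lt with rfl | h
      · simp at h3
      · exact h
  have neg_of : ∀ τ, -Real.pi < τ → τ ≤ Real.pi → Real.sin τ < 0 → τ < 0 := by
    intro τ h1 h2 h3
    by_contra! h; linarith [Real.sin_nonneg_of_nonneg_of_le_pi h h2]
  rcases lt_or_gt_of_ne (left_ne_zero_of_mul hab.ne') with ha | ha
  · have hb : Real.sin β < 0 := by by_contra! h; nlinarith
    have hα0 := neg_of α hα1 hα2 ha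
    have hβ0 := neg_of β hβ1 hβ2 hb
    rcases lt_or_gt_of_ne hne' with h | h
    · exact main α β hp₁ hp₂ hs₁ hs₂ h (by linarith) fun s hs => mul_pos_of_neg_of_neg ha
        (Real.sin_neg_of_neg_of_neg_pi_lt (by linarith [hs.2]) (by linarith [hs.1]))
    · exact main β α hp₂ hp₁ hs₂ hs₁ h (by linarith) fun s hs => mul_pos_of_neg_of_neg hb
        (Real.sin_neg_of_neg_of_neg_pi_lt (by linarith [hs.2]) (by linarith [hs.1]))
  · have hb : 0 < Real.sin β := by by_contra! h; nlinarith
    obtain ⟨hα0, hα3⟩ := pos_of α hα1 hα2 ha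
    obtain ⟨hβ0, hβ3⟩ := pos_of β hβ1 hβ2 hb
    rcases lt_or_gt_of_ne hne' with h | h
    · exact main α β hp₁ hp₂ hs₁ hs₂ h (by linarith) fun s hs => mul_pos ha
        (Real.sin_pos_of_pos_of_lt_pi (by linarith [hs.1]) (by linarith [hs.2]))
    · exact main β α hp₂ hp₁ hs₂ hs₁ h (by linarith) fun s hs => mul_pos hb
        (Real.sin_pos_of_pos_of_lt_pi (by linarith [hs.1]) (by linarith [hs.2]))

/-- Gram–Schmidt for two unit vectors which are not collinear. -/
lemma exists_orthonormal {e v : EuclideanSpace ℝ (Fin N)} (he : ‖e‖ = 1) (hv : ‖v‖ = 1)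
    (h1 : v ≠ e) (h2 : v ≠ -e) :
    ∃ g : EuclideanSpace ℝ (Fin N), ‖g‖ = 1 ∧ ⟪e, g⟫ = 0 ∧ ∃ a b : ℝ, v = a • e + b • g := by
  set w := v - ⟪e, v⟫ • e with hw
  have hew : ⟪e, w⟫ = 0 := by
    rw [hw, inner_sub_right, inner_smul_right, inner_self_of_unit he]; ring
  have hw0 : w ≠ 0 := by
    intro h
    have hv' : v = ⟪e, v⟫ • e := sub_eq_zero.1 h
    have : |⟪e, v⟫| = 1 := by
      have h3 := congrArg norm hv'
      rw [norm_smul, he, hv, mul_one] at h3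
      exact h3.symm
    rcases (abs_eq zero_le_one).1 this with h3 | h3
    · rw [h3, one_smul] at hv'; exact h1 hv'
    · rw [h3, neg_one_smul] at hv'; exact h2 hv'
  have hn : ‖w‖ ≠ 0 := norm_ne_zero_iff.2 hw0
  refine ⟨‖w‖⁻¹ • w, ?_, ?_, ⟪e, v⟫, ‖w‖, ?_⟩
  · rw [norm_smul, norm_inv, norm_norm, inv_mul_cancel₀ hn]
  · rw [inner_smul_right, hew, mul_zero]
  · rw [smul_smul, mul_inv_cancel₀ hn, one_smul, hw]; module

/-! ### Symmetry directions form the unit sphere of a subspace -/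

lemma isClosed_symSet (hB : IsRadialDomain B) (h𝓤 : ∀ u ∈ 𝓤, ContinuousOn u B) :
    IsClosed (symSet B 𝓤) := by
  have : symSet B 𝓤 = reflMonotoneSet B 𝓤 ∩ Neg.neg ⁻¹' reflMonotoneSet B 𝓤 := by
    ext e; exact mem_symSet_iff hB
  rw [this]
  exact (isClosed_reflMonotoneSet hB h𝓤).inter
    ((isClosed_reflMonotoneSet hB h𝓤).preimage continuous_neg)

/-- On a preconnected set of unit vectors free of symmetry directions, `M` and `-M` cannot both
occur. -/
lemma subset_or_of_isPreconnected (hB : IsRadialDomain B) (h𝓤 : ∀ u ∈ 𝓤, ContinuousOn u B)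
    (hall : ∀ e, ‖e‖ = 1 → e ∈ reflMonotoneSet B 𝓤 ∨ -e ∈ reflMonotoneSet B 𝓤)
    {K : Set (EuclideanSpace ℝ (Fin N))} (hK : IsPreconnected K) (hK1 : ∀ e ∈ K, ‖e‖ = 1)
    (hKs : ∀ e ∈ K, e ∉ symSet B 𝓤) :
    (∀ e ∈ K, e ∈ reflMonotoneSet B 𝓤) ∨ (∀ e ∈ K, -e ∈ reflMonotoneSet B 𝓤) := by
  by_contra! hcon
  obtain ⟨⟨a, ha, ha'⟩, b, hb, hb'⟩ := hcon
  have hM := isClosed_reflMonotoneSet hB h𝓤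
  have hM' : IsClosed (-reflMonotoneSet B 𝓤) := hM.preimage continuous_neg
  have hcov : K ⊆ reflMonotoneSet B 𝓤 ∪ -reflMonotoneSet B 𝓤 := fun e he => by
    rw [mem_union, Set.mem_neg]
    exact hall e (hK1 e he)
  have hb1 : b ∈ reflMonotoneSet B 𝓤 := (hall b (hK1 b hb)).resolve_right hb'
  have ha1 : a ∈ -reflMonotoneSet B 𝓤 := by
    rw [Set.mem_neg]
    exact (hall a (hK1 a ha)).resolve_left ha'
  obtain ⟨c, hc, hc1, hc2⟩ := isPreconnected_closed_iff.1 hK _ _ hM hM' hcov ⟨b, hb, hb1⟩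
    ⟨a, ha, ha1⟩
  rw [Set.mem_neg] at hc2
  exact hKs c hc ((mem_symSet_iff hB).2 ⟨hc1, hc2⟩)

/-- If every direction is monotone up to sign, two noncollinear symmetry directions make all
directions of their plane symmetric: a gap between consecutive symmetry directions would be an arc
of `M` or of `-M` shorter than a half circle. -/
lemma circ_mem_of_two (hB : IsRadialDomain B) (h𝓤 : ∀ u ∈ 𝓤, ContinuousOn u B)
    (hall : ∀ e, ‖e‖ = 1 → e ∈ reflMonotoneSet B 𝓤 ∨ -e ∈ reflMonotoneSet B 𝓤)
    (hf : ‖f‖ = 1) (hg : ‖g‖ = 1) (hfg : ⟪f, g⟫ = 0) {β : ℝ}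
    (hfs : f ∈ symSet B 𝓤) (hβs : circ f g β ∈ symSet B 𝓤) (hβ0 : 0 < β) (hβ1 : β < Real.pi)
    (γ : ℝ) : circ f g γ ∈ symSet B 𝓤 := by
  by_contra hγ
  set A : Set ℝ := circ f g ⁻¹' symSet B 𝓤 with hA
  have hAc : IsClosed A := (isClosed_symSet hB h𝓤).preimage continuous_circ
  have hAp : ∀ θ ∈ A, θ + Real.pi ∈ A := by
    intro θ hθ
    change circ f g (θ + Real.pi) ∈ symSet B 𝓤
    rw [circ_add_pi]; exact neg_mem_symSet hB hθ
  have hAm : ∀ θ ∈ A, θ - Real.pi ∈ A := by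
    intro θ hθ
    have h := circ_add_pi (f := f) (g := g) (θ - Real.pi)
    rw [sub_add_cancel] at h
    change circ f g (θ - Real.pi) ∈ symSet B 𝓤
    rw [← neg_neg (circ f g (θ - Real.pi)), ← h]
    exact neg_mem_symSet hB hθ
  have hAz : ∀ θ ∈ A, ∀ k : ℤ, θ + k * Real.pi ∈ A := by
    intro θ hθ k
    induction k using Int.induction_on with
    | zero => simpa using hθ
    | succ k ih => convert hAp _ ih using 1; push_cast; ring
    | pred k ih => convert hAm _ ih using 1; push_cast; ring
  have h0 : (0 : ℝ) ∈ A := by simpa [hA, circ] using hfs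
  have hβA : β ∈ A := hβs
  -- Two consecutive elements of `A` around `γ` differ by less than `π`.
  have hgap : ∃ a b, a ∈ A ∧ b ∈ A ∧ a < γ ∧ γ < b ∧ b - a < Real.pi := by
    obtain ⟨k, hk⟩ : ∃ k : ℤ, k * Real.pi ≤ γ ∧ γ < (k + 1) * Real.pi :=
      ⟨⌊γ / Real.pi⌋, by
        rw [← le_div_iff₀ Real.pi_pos]; exact Int.floor_le _, by
        rw [← div_lt_iff₀ Real.pi_pos]; exact Int.lt_floor_add_one _⟩
    have e0 : (k : ℝ) * Real.pi ∈ A := by simpa using hAz 0 h0 k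
    have e1 : ((k : ℝ) + 1) * Real.pi ∈ A := by simpa using hAz 0 h0 (k + 1)
    have e2 : β + k * Real.pi ∈ A := hAz β hβA k
    have hn : ∀ θ ∈ A, θ ≠ γ := fun θ hθ h => hγ (h ▸ hθ)
    rcases lt_or_gt_of_ne (hn _ e2) with h | h
    · exact ⟨_, _, e2, e1, h, hk.2, by linarith⟩
    · exact ⟨_, _, e0, e2, lt_of_le_of_ne hk.1 (hn _ e0), h, by linarith⟩
  obtain ⟨a, b, ha, hb, haγ, hγb, hab⟩ := hgap
  have hL : IsCompact (A ∩ Icc a γ) := isCompact_Icc.inter_left hAc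
  have hR : IsCompact (A ∩ Icc γ b) := isCompact_Icc.inter_left hAc
  obtain ⟨a', ⟨ha'A, ha'I⟩, ha'm⟩ := hL.exists_isGreatest ⟨a, ha, le_rfl, haγ.le⟩
  obtain ⟨b', ⟨hb'A, hb'I⟩, hb'm⟩ := hR.exists_isLeast ⟨b, hb, hγb.le, le_rfl⟩
  have ha'γ : a' < γ := lt_of_le_of_ne ha'I.2 fun h => hγ (h ▸ ha'A)
  have hγb' : γ < b' := lt_of_le_of_ne hb'I.1 fun h => hγ (h ▸ hb'A)
  have hfree : ∀ s ∈ Ioo a' b', s ∉ A := by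
    intro s hs hsA
    rcases le_total s γ with h | h
    · exact absurd (ha'm ⟨hsA, by linarith [ha'I.1, hs.1], h⟩) (not_le.2 hs.1)
    · exact absurd (hb'm ⟨hsA, h, by linarith [hb'I.2, hs.2]⟩) (not_le.2 hs.2)
  have hpre : IsPreconnected (circ f g '' Ioo a' b') :=
    isPreconnected_Ioo.image _ continuous_circ.continuousOn
  have hlt : a' < b' := ha'γ.trans hγb'
  have hlen : b' - a' < Real.pi := by linarith [ha'I.1, hb'I.2]
  have hends : ∀ s ∈ Icc a' b', s ∈ Ioo a' b' ∨ s ∈ A := by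
    intro s hs
    rcases hs.1.eq_or_lt with rfl | h1
    · exact Or.inr ha'A
    rcases hs.2.eq_or_lt with rfl | h2
    · exact Or.inr hb'A
    exact Or.inl ⟨h1, h2⟩
  rcases subset_or_of_isPreconnected hB h𝓤 hall hpre
    (by rintro _ ⟨s, _, rfl⟩; exact norm_circ hf hg hfg s)
    (by rintro _ ⟨s, hs, rfl⟩; exact hfree s hs) with h | h
  · refine hγ (circ_mem_of_short_arc hB hf hg hfg hlt hlen ha'A hb'A (fun s hs => ?_) γ)
    rcases hends s hs with h1 | h1
    · exact h _ ⟨s, h1, rfl⟩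
    · exact ((mem_symSet_iff hB).1 h1).1
  · refine hγ (circ_mem_of_short_arc hB hf hg hfg (α := a' + Real.pi) (β := b' + Real.pi)
      (by linarith) (by linarith) (hAp _ ha'A) (hAp _ hb'A) (fun s hs => ?_) γ)
    have hs' : s - Real.pi ∈ Icc a' b' := ⟨by linarith [hs.1], by linarith [hs.2]⟩
    have e := circ_add_pi (f := f) (g := g) (s - Real.pi)
    rw [sub_add_cancel] at e
    rw [e]
    rcases hends _ hs' with h1 | h1
    · exact h _ ⟨_, h1, rfl⟩
    · exact ((mem_symSet_iff hB).1 h1).2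

/-- The cone over the set of symmetry directions is closed under addition. -/
lemma symSet_add (hB : IsRadialDomain B) (h𝓤 : ∀ u ∈ 𝓤, ContinuousOn u B)
    (hall : ∀ e, ‖e‖ = 1 → e ∈ reflMonotoneSet B 𝓤 ∨ -e ∈ reflMonotoneSet B 𝓤)
    {e v : EuclideanSpace ℝ (Fin N)} (he : e ∈ symSet B 𝓤) (hv : v ∈ symSet B 𝓤) (c d : ℝ) :
    ∃ r : ℝ, ∃ w ∈ symSet B 𝓤, c • e + d • v = r • w := by
  by_cases h1 : v = e
  · exact ⟨c + d, e, he, by rw [h1]; module⟩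
  by_cases h2 : v = -e
  · exact ⟨c - d, e, he, by rw [h2]; module⟩
  obtain ⟨g, hg, heg, a, b, hvab⟩ := exists_orthonormal he.1 hv.1 h1 h2
  -- One of `v`, `-v` has its angle in `(0, π)`.
  obtain ⟨β, hβs, hβ0, hβ1⟩ : ∃ β, circ e g β ∈ symSet B 𝓤 ∧ 0 < β ∧ β < Real.pi := by
    have hnorm : a ^ 2 + b ^ 2 = 1 := by
      have h := inner_self_of_unit hv.1
      have hge : ⟪g, e⟫ = 0 := by rw [real_inner_comm, heg]
      rw [hvab] at h
      simp only [inner_add_left, inner_add_right, inner_smul_left, inner_smul_right,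
        inner_self_of_unit he.1, inner_self_of_unit hg, heg, hge] at h
      simp at h
      linarith
    have hb0 : b ≠ 0 := by
      rintro rfl
      have : a = 1 ∨ a = -1 := by
        rw [← sq_eq_one_iff]; linarith
      rcases this with rfl | rfl
      · exact h1 (by rw [hvab]; simp)
      · exact h2 (by rw [hvab]; simp)
    have hcirc : ∀ x y : ℝ, x ^ 2 + y ^ 2 = 1 → 0 < y → x • e + y • g ∈ symSet B 𝓤 →
        ∃ β, circ e g β ∈ symSet B 𝓤 ∧ 0 < β ∧ β < Real.pi := by
      intro x y hxy hy hmem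
      have hx1 : -1 < x := by nlinarith
      have hx2 : x < 1 := by nlinarith
      refine ⟨Real.arccos x, ?_, Real.arccos_pos.2 hx2, ?_⟩
      · rw [circ, Real.cos_arccos hx1.le hx2.le, Real.sin_arccos,
          show 1 - x ^ 2 = y ^ 2 by linarith, Real.sqrt_sq hy.le]
        exact hmem
      · exact lt_of_le_of_ne (Real.arccos_le_pi x) fun h => by
          rw [Real.arccos_eq_pi] at h; linarith
    rcases lt_or_gt_of_ne hb0 with hb | hb
    · refine hcirc (-a) (-b) (by linarith) (by linarith) ?_
      have := neg_mem_symSet hB hv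
      rw [hvab] at this
      convert this using 1; module
    · exact hcirc a b hnorm hb (hvab ▸ hv)
  obtain ⟨r, θ, hr⟩ := exists_circ e g (c + d * a) (d * b)
  refine ⟨r, circ e g θ, circ_mem_of_two hB h𝓤 hall he.1 hg heg he hβs hβ0 hβ1 θ, ?_⟩
  rw [← hr, hvab]; module

/-- If every direction is monotone up to sign, then `M` contains a closed hemisphere. -/
lemma exists_hemisphere (hB : IsRadialDomain B) (h𝓤 : ∀ u ∈ 𝓤, ContinuousOn u B)
    (hall : ∀ e, ‖e‖ = 1 → e ∈ reflMonotoneSet B 𝓤 ∨ -e ∈ reflMonotoneSet B 𝓤)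
    {s : EuclideanSpace ℝ (Fin N)} (hs : s ∈ symSet B 𝓤) :
    ∃ p : EuclideanSpace ℝ (Fin N), ‖p‖ = 1 ∧
      ∀ e, ‖e‖ = 1 → 0 ≤ ⟪e, p⟫ → e ∈ reflMonotoneSet B 𝓤 := by
  let W : Submodule ℝ (EuclideanSpace ℝ (Fin N)) :=
    { carrier := {v | ∃ r : ℝ, ∃ w ∈ symSet B 𝓤, v = r • w}
      zero_mem' := ⟨0, s, hs, by simp⟩
      add_mem' := by
        rintro _ _ ⟨c, e, he, rfl⟩ ⟨d, v, hv, rfl⟩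
        exact symSet_add hB h𝓤 hall he hv c d
      smul_mem' := by
        rintro c _ ⟨r, w, hw, rfl⟩
        exact ⟨c * r, w, hw, by rw [smul_smul]⟩ }
  have hWs : ∀ e ∈ symSet B 𝓤, e ∈ W := fun e he => ⟨1, e, he, by simp⟩
  by_cases hW : W = ⊤
  · refine ⟨s, hs.1, fun e he _ => ?_⟩
    obtain ⟨r, w, hw, hr⟩ : e ∈ W := hW ▸ Submodule.mem_top
    have hr1 : |r| = 1 := by
      have h := congrArg norm hr
      rw [norm_smul, he, hw.1, mul_one] at h
      exact h.symm
    rcases (abs_eq zero_le_one).1 hr1 with h | h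
    · rw [hr, h, one_smul]; exact ((mem_symSet_iff hB).1 hw).1
    · rw [hr, h, neg_one_smul]; exact ((mem_symSet_iff hB).1 hw).2
  · have hWo : Wᗮ ≠ ⊥ := fun h => hW (Submodule.orthogonal_eq_bot_iff.1 h)
    obtain ⟨q, hq, hq0⟩ := Submodule.exists_mem_ne_zero_of_ne_bot hWo
    have hqn : ‖q‖ ≠ 0 := norm_ne_zero_iff.2 hq0
    set p := ‖q‖⁻¹ • q with hp
    have hp1 : ‖p‖ = 1 := by rw [hp, norm_smul, norm_inv, norm_norm, inv_mul_cancel₀ hqn]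
    have hps : ∀ e ∈ symSet B 𝓤, ⟪e, p⟫ = 0 := fun e he => by
      rw [hp, inner_smul_right, (Submodule.mem_orthogonal W q).1 hq e (hWs e he), mul_zero]
    have hpre : IsPreconnected ((fun v : EuclideanSpace ℝ (Fin N) => ‖v‖⁻¹ • v) ''
        {v | 0 < ⟪v, p⟫}) := by
      have hconv : Convex ℝ {v : EuclideanSpace ℝ (Fin N) | 0 < ⟪v, p⟫} :=
        convex_halfSpace_gt ⟨fun x y => inner_add_left _ _ _, fun c x => by
          simp [inner_smul_left]⟩ 0
      refine hconv.isPreconnected.image _ ?_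
      refine ContinuousOn.smul (continuous_norm.continuousOn.inv₀ ?_) continuousOn_id
      rintro v hv h0
      rw [norm_eq_zero] at h0
      simp [h0] at hv
    have hopen : (∀ e, ‖e‖ = 1 → 0 < ⟪e, p⟫ → e ∈ reflMonotoneSet B 𝓤) ∨
        (∀ e, ‖e‖ = 1 → 0 < ⟪e, p⟫ → -e ∈ reflMonotoneSet B 𝓤) := by
      have hmem : ∀ e : EuclideanSpace ℝ (Fin N), ‖e‖ = 1 → 0 < ⟪e, p⟫ →
          e ∈ (fun v : EuclideanSpace ℝ (Fin N) => ‖v‖⁻¹ • v) '' {v | 0 < ⟪v, p⟫} :=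
        fun e he h => ⟨e, h, by simp [he]⟩
      have hpos : ∀ v : EuclideanSpace ℝ (Fin N), 0 < ⟪v, p⟫ → 0 < ‖v‖ := by
        intro v hv
        refine norm_pos_iff.2 ?_
        rintro rfl
        simp at hv
      refine (subset_or_of_isPreconnected hB h𝓤 hall hpre ?_ ?_).imp
        (fun h e he h0 => h e (hmem e he h0)) (fun h e he h0 => h e (hmem e he h0))
      · rintro _ ⟨v, hv, rfl⟩
        have := hpos v hv
        simp only [norm_smul, norm_inv, norm_norm]
        exact inv_mul_cancel₀ this.ne'
      · rintro _ ⟨v, hv, rfl⟩ hsym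
        have h1 := hps _ hsym
        rw [inner_smul_left] at h1
        have h2 : 0 < ‖v‖⁻¹ * ⟪v, p⟫ := mul_pos (inv_pos.2 (hpos v hv)) hv
        exact (ne_of_gt h2) h1
    -- `M` is closed, so the bounding great sphere may be added to the open hemisphere.
    have hclose : ∀ p' : EuclideanSpace ℝ (Fin N), ‖p'‖ = 1 →
        (∀ e, ‖e‖ = 1 → 0 < ⟪e, p'⟫ → e ∈ reflMonotoneSet B 𝓤) →
        ∀ e, ‖e‖ = 1 → 0 ≤ ⟪e, p'⟫ → e ∈ reflMonotoneSet B 𝓤 := by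
      intro p' hp' h e he h0
      rcases h0.eq_or_lt with h0 | h0
      · have hcl : IsClosed (circ e p' ⁻¹' reflMonotoneSet B 𝓤) :=
          (isClosed_reflMonotoneSet hB h𝓤).preimage continuous_circ
        have hsub : Ioo 0 Real.pi ⊆ circ e p' ⁻¹' reflMonotoneSet B 𝓤 := by
          intro t ht
          refine h _ (norm_circ he hp' h0.symm t) ?_
          rw [circ, inner_add_left, inner_smul_left, inner_smul_left, ← h0,
            inner_self_of_unit hp']
          simpa using Real.sin_pos_of_pos_of_lt_pi ht.1 ht.2
        have h1 := closure_minimal hsub hcl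
        rw [closure_Ioo Real.pi_pos.ne] at h1
        simpa [circ] using h1 ⟨le_rfl, Real.pi_pos.le⟩
      · exact h e he h0
    rcases hopen with h | h
    · exact ⟨p, hp1, hclose p hp1 h⟩
    · refine ⟨-p, by simpa using hp1, hclose (-p) (by simpa using hp1) fun e he h0 => ?_⟩
      have := h (-e) (by simpa using he) (by
        rw [inner_neg_left]; rw [inner_neg_right] at h0; exact h0)
      simpa using this

/-- A closed hemisphere of monotone directions centered at `p` gives foliated Schwarz symmetry:
two points of equal norm are exchanged by the reflection in the direction of their difference. -/
lemma foliatedSchwarzOn_of_hemisphere {p : EuclideanSpace ℝ (Fin N)}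
    (h : ∀ e, ‖e‖ = 1 → 0 ≤ ⟪e, p⟫ → e ∈ reflMonotoneSet B 𝓤)
    {u : EuclideanSpace ℝ (Fin N) → ℝ} (hu : u ∈ 𝓤) : FoliatedSchwarzOn B u p := by
  intro x hx y _ hxy hp
  rcases eq_or_ne x y with rfl | hne
  · exact le_rfl
  have hd : ‖x - y‖ ≠ 0 := norm_ne_zero_iff.2 (sub_ne_zero.2 hne)
  have hdpos : 0 < ‖x - y‖ := norm_pos_iff.2 (sub_ne_zero.2 hne)
  have hinner : 2 * ⟪x, x - y⟫ = ‖x - y‖ ^ 2 := by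
    rw [← real_inner_self_eq_norm_sq]
    simp only [inner_sub_left, inner_sub_right, real_inner_self_eq_norm_sq, hxy,
      real_inner_comm x y]
    ring
  have he : ‖(‖x - y‖⁻¹ • (x - y))‖ = 1 := by
    rw [norm_smul, norm_inv, norm_norm, inv_mul_cancel₀ hd]
  have hmem := h _ he (by
    rw [inner_smul_left, inner_sub_left]
    exact mul_nonneg (inv_nonneg.2 hdpos.le) (sub_nonneg.2 hp))
  have hre : reflHyp (‖x - y‖⁻¹ • (x - y)) x = y := by
    rw [reflHyp, inner_smul_right, smul_smul]
    have : 2 * (‖x - y‖⁻¹ * ⟪x, x - y⟫) * ‖x - y‖⁻¹ = 1 := by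
      field_simp
      exact hinner
    rw [this, one_smul, sub_sub_cancel]
  have := le_of_mem_reflMonotoneSet hmem hu hx (by
    rw [inner_smul_right]
    exact mul_nonneg (inv_nonneg.2 hdpos.le) (by nlinarith))
  rwa [hre] at this

end Directions

/-- Proposition `sec:char-foli-schw-1` of the paper:
let `etilde ∈ M`, and suppose that for every two-dimensional subspace `P` containing
`etilde` there are two distinct points `p₁, p₂` in the same connected component of
`M ∩ P` which are symmetry directions for every `u ∈ 𝓤`.  Then all `u ∈ 𝓤` are
foliated Schwarz symmetric with respect to a common unit vector `p`. -/
theorem foliatedSchwarz_of_rotating_planes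
    (N : ℕ) (hN : 2 ≤ N)
    (B : Set (EuclideanSpace ℝ (Fin N))) (hB : IsRadialDomain B)
    (𝓤 : Set (EuclideanSpace ℝ (Fin N) → ℝ))
    (h𝓤 : ∀ u ∈ 𝓤, ContinuousOn u B)
    (etilde : EuclideanSpace ℝ (Fin N)) (hetilde : etilde ∈ reflMonotoneSet B 𝓤)
    (hP : ∀ P : Submodule ℝ (EuclideanSpace ℝ (Fin N)),
      Module.finrank ℝ P = 2 → etilde ∈ P →
      ∃ p₁ p₂ : EuclideanSpace ℝ (Fin N), p₁ ≠ p₂ ∧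
        p₁ ∈ reflMonotoneSet B 𝓤 ∩ (P : Set (EuclideanSpace ℝ (Fin N))) ∧
        p₂ ∈ connectedComponentIn
          (reflMonotoneSet B 𝓤 ∩ (P : Set (EuclideanSpace ℝ (Fin N)))) p₁ ∧
        (∀ u ∈ 𝓤, ∀ x ∈ B, u (reflHyp p₁ x) = u x) ∧
        (∀ u ∈ 𝓤, ∀ x ∈ B, u (reflHyp p₂ x) = u x)) :
    ∃ p : EuclideanSpace ℝ (Fin N), ‖p‖ = 1 ∧
      ∀ u ∈ 𝓤, FoliatedSchwarzOn B u p := by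
  have het1 : ‖etilde‖ = 1 := hetilde.1
  -- The hypothesis on the plane spanned by an orthonormal pair.
  have hplane : ∀ f g : EuclideanSpace ℝ (Fin N), ‖f‖ = 1 → ‖g‖ = 1 → ⟪f, g⟫ = 0 →
      etilde ∈ Submodule.span ℝ {f, g} →
      (f ∈ reflMonotoneSet B 𝓤 ∨ -f ∈ reflMonotoneSet B 𝓤) ∧ (symSet B 𝓤).Nonempty := by
    intro f g hf hg hfg hmem
    have hon : Orthonormal ℝ ![f, g] := by
      rw [orthonormal_iff_ite]
      have hgf : ⟪g, f⟫ = 0 := by rw [real_inner_comm, hfg]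
      intro i j
      fin_cases i <;> fin_cases j <;> simp [hf, hg, hfg, hgf]
    have hfin : Module.finrank ℝ
        (Submodule.span ℝ ({f, g} : Set (EuclideanSpace ℝ (Fin N)))) = 2 := by
      have := finrank_span_eq_card hon.linearIndependent
      rw [show range ![f, g] = {f, g} by
        simp [Matrix.range_cons, Matrix.range_empty, Set.pair_comm]] at this
      simpa using this
    obtain ⟨p₁, p₂, hne, hp₁, hp₂, hs₁, hs₂⟩ := hP _ hfin hmem
    have hKsub := connectedComponentIn_subset
      (reflMonotoneSet B 𝓤 ∩ (Submodule.span ℝ {f, g} : Set (EuclideanSpace ℝ (Fin N)))) p₁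
    have hsym₁ : p₁ ∈ symSet B 𝓤 := ⟨hp₁.1.1, hs₁⟩
    refine ⟨mem_or_neg_mem_of_plane hB hf hg hfg isPreconnected_connectedComponentIn
      (fun v hv => (hKsub hv).1) (fun v hv => ?_) hne (mem_connectedComponentIn hp₁) hp₂ hsym₁
      ⟨(hKsub hp₂).1.1, hs₂⟩, p₁, hsym₁⟩
    obtain ⟨hv1, hv2⟩ := hKsub hv
    obtain ⟨a, b, hab⟩ := Submodule.mem_span_pair.1 hv2
    obtain ⟨r, θ, hr⟩ := exists_circ f g a b
    rw [hab] at hr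
    have hr1 : |r| = 1 := by
      have h := congrArg norm hr
      rw [norm_smul, norm_circ hf hg hfg, hv1.1, mul_one] at h
      exact h.symm
    rcases (abs_eq zero_le_one).1 hr1 with h | h
    · exact ⟨θ, by rw [hr, h, one_smul]⟩
    · exact ⟨θ + Real.pi, by rw [hr, h, neg_one_smul, circ_add_pi]⟩
  have hall : ∀ e, ‖e‖ = 1 → e ∈ reflMonotoneSet B 𝓤 ∨ -e ∈ reflMonotoneSet B 𝓤 := by
    intro e he
    by_cases h1 : etilde = e
    · exact Or.inl (h1 ▸ hetilde)
    by_cases h2 : etilde = -e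
    · exact Or.inr (h2 ▸ hetilde)
    obtain ⟨g, hg, heg, a, b, hab⟩ := exists_orthonormal he het1 h1 h2
    exact (hplane e g he hg heg (Submodule.mem_span_pair.2 ⟨a, b, hab.symm⟩)).1
  -- `N ≥ 2` provides some plane through `etilde`.
  obtain ⟨g, hg, heg⟩ : ∃ g : EuclideanSpace ℝ (Fin N), ‖g‖ = 1 ∧ ⟪etilde, g⟫ = 0 := by
    have hne : (Submodule.span ℝ {etilde})ᗮ ≠ ⊥ := by
      intro h
      rw [Submodule.orthogonal_eq_bot_iff] at h
      have h1 := finrank_span_singleton (K := ℝ)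
        (norm_ne_zero_iff.1 (by rw [het1]; exact one_ne_zero) : etilde ≠ 0)
      rw [h, finrank_top, finrank_euclideanSpace_fin] at h1
      omega
    obtain ⟨q, hq, hq0⟩ := Submodule.exists_mem_ne_zero_of_ne_bot hne
    refine ⟨‖q‖⁻¹ • q, ?_, ?_⟩
    · rw [norm_smul, norm_inv, norm_norm, inv_mul_cancel₀ (norm_ne_zero_iff.2 hq0)]
    · rw [inner_smul_right, Submodule.mem_orthogonal_singleton_iff_inner_right.1 hq, mul_zero]
  obtain ⟨s, hs⟩ := (hplane etilde g het1 hg heg (Submodule.subset_span (by simp))).2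
  obtain ⟨p, hp, hemi⟩ := exists_hemisphere hB h𝓤 hall hs
  exact ⟨p, hp, fun u hu => foliatedSchwarzOn_of_hemisphere hemi hu⟩

end
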